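/- Let E be a finite-dimensional real inner product space of dimension at least 2, let x ∈ E be a nonzero vector, let j ≥ 2 be a natural number, and let A : E → E be a self-adjoint linear operator with A x = 0. Then there exists a j-multilinear map B from E^j to the space of linear endomorphisms of E such that the associated homogeneous polynomial map G : E → End(E), G(v) = B(v, v, …, v), satisfies: (i) G(v) is self-adjoint for every v ∈ E; (ii) G(v) v = 0 for every v ∈ E; and (iii) G(x) = A. -/

import Mathlib

/-- Multiplying the diagonal of a bilinear map by a power of a linear form gives the diagonal of a
multilinear map. -/
theorem exists_multilinearMap_diagonal_eq_pow_smul {R M N : Type*} [CommSemiring R]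
    [AddCommMonoid M] [Module R M] [AddCommMonoid N] [Module R N]
    (f : M →ₗ[R] R) (L : M →ₗ[R] M →ₗ[R] N) (k : ℕ) :
    ∃ B : MultilinearMap R (fun _ : Fin (k + 2) => M) N,
      ∀ v, B (fun _ => v) = f v ^ k • L v v := by
  induction k with
  | zero =>
    refine ⟨LinearMap.uncurryLeft (M := fun _ : Fin 2 => M)
      ((MultilinearMap.ofSubsingletonₗ R R M N (0 : Fin 1)).toLinearMap ∘ₗ L), fun v => ?_⟩
    simp [Fin.tail_def]
  | succ k ih =>
    obtain ⟨B, hB⟩ := ih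
    refine ⟨LinearMap.uncurryLeft (M := fun _ : Fin (k + 3) => M) (f.smulRight B), fun v => ?_⟩
    simp [Fin.tail_def, hB, pow_succ', mul_smul]

/-- The bilinear map `(v, u) ↦ f v • u - f u • v`. -/
def LinearMap.alternatingSMul {R M : Type*} [CommRing R] [AddCommGroup M] [Module R M]
    (f : M →ₗ[R] R) : M →ₗ[R] M →ₗ[R] M :=
  LinearMap.mk₂ R (fun v u => f v • u - f u • v)
    (fun _ _ _ => by simp only [map_add]; module)
    (fun _ _ _ => by simp only [map_smul, smul_eq_mul]; module)
    (fun _ _ _ => by simp only [map_add]; module)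
    (fun _ _ _ => by simp only [map_smul, smul_eq_mul]; module)

theorem LinearMap.alternatingSMul_apply {R M : Type*} [CommRing R] [AddCommGroup M] [Module R M]
    (f : M →ₗ[R] R) (v u : M) : f.alternatingSMul v u = f v • u - f u • v :=
  rfl

/-- Claim A.2: given a nonzero vector `x` and a self-adjoint operator `A` with `A x = 0`,
for any degree `j ≥ 2` there is a `j`-multilinear map `B` whose associated homogeneous
polynomial map `G v = B (v, …, v)` takes self-adjoint values, satisfies `G v v = 0` for all
`v`, and realizes the prescribed value `G x = A`. -/
theorem exists_homogeneous_realizing_selfAdjoint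
    {E : Type*} [NormedAddCommGroup E] [InnerProductSpace ℝ E] [FiniteDimensional ℝ E]
    (hdim : 2 ≤ Module.finrank ℝ E)
    (x : E) (hx : x ≠ 0) (j : ℕ) (hj : 2 ≤ j)
    (A : E →ₗ[ℝ] E) (hA : A.IsSymmetric) (hAx : A x = 0) :
    ∃ B : MultilinearMap ℝ (fun _ : Fin j => E) (E →ₗ[ℝ] E),
      (∀ v : E, (B (fun _ => v)).IsSymmetric) ∧
      (∀ v : E, B (fun _ => v) v = 0) ∧
      B (fun _ => x) = A := by
  obtain ⟨k, rfl⟩ := Nat.exists_eq_add_of_le' hj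
  let f : E →ₗ[ℝ] ℝ := (inner ℝ x x)⁻¹ • innerₗ E x
  have hfx : f x = 1 := inv_mul_cancel₀ (inner_self_ne_zero.mpr hx)
  let P := f.alternatingSMul
  have hAP : A ∘ₗ P x = A := by
    ext u
    simp [P, LinearMap.alternatingSMul_apply, hfx, hAx]
  let L : E →ₗ[ℝ] E →ₗ[ℝ] (E →ₗ[ℝ] E) :=
    LinearMap.mk₂ ℝ (fun v w => (P v).adjoint ∘ₗ A ∘ₗ P w)
      (fun _ _ _ => by simp only [map_add, LinearMap.add_comp])
      (fun _ _ _ => by simp [LinearMap.smul_comp])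
      (fun _ _ _ => by simp only [map_add, LinearMap.comp_add])
      (fun _ _ _ => by simp only [map_smul, LinearMap.comp_smul])
  have hL (v : E) : L v v = (P v).adjoint ∘ₗ A ∘ₗ P v := rfl
  obtain ⟨B, hB⟩ := exists_multilinearMap_diagonal_eq_pow_smul f L k
  refine ⟨B, fun v => ?_, fun v => ?_, ?_⟩
  · rw [hB, hL]
    exact (hA.adjoint_conj (P v)).smul (by simp)
  · simp [hB, hL, P, LinearMap.alternatingSMul_apply]
  · rw [hB, hL, hAP, hfx, one_pow, one_smul]
    have hA' : A.adjoint = A := (A.isSymmetric_iff_isSelfAdjoint).mp hA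
    simpa [LinearMap.adjoint_comp, hA'] using congrArg LinearMap.adjoint hAP
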